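/- For every n ≥ 1 and d ≥ 1 there exists a nonempty Zariski-open subset U'_d of R_d = ℂ[x_0,…,x_n]_d such that for every f ∈ U'_d one has dim_ℂ A(f)_k = C(n+k, n) for all 0 ≤ k ≤ d/2 and dim_ℂ A(f)_k = C(n+d−k, n) for all d/2 < k ≤ d; equivalently, Ann(f)_k = 0 for all k ≤ d/2. -/

import Mathlib

/-!
Write `⟨f, q⟩` for the constant term of `q(∂) f`. For a form `f` of degree `j + k`, the space
`Ann(f)_k` is the kernel of the catalecticant matrix with entries `⟨f, X^(γ + α)⟩`, where
`|γ| = j` and `|α| = k`. Exchanging `j` and `k` transposes this matrix, so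
`dim A(f)_k = dim A(f)_j`, and only `Ann(f)_k = 0` for `k ≤ d/2` has to be arranged. As `Ann(f)`
is an ideal, `k = ⌊d/2⌋` suffices.

Injectivity is an open condition: if `B` is a left inverse of the catalecticant matrix of `f₀`,
then that of `f` is injective wherever `det (B * catalecticant f) ≠ 0`, and this determinant is
a polynomial in the coefficients of `f`.

A suitable `f₀` is `∑ a ∈ S, ℓ_a ^ d`, where `ℓ_a = ∑ a_i x_i` and `S` is a finite set of points
with positive real coordinates on which no nonzero form of degree `k` vanishes. Since
`⟨ℓ_a ^ d, g⟩ = d! g(a)`, pairing `f₀` with `q * conj q * x₀ ^ (d - 2k)` for `q ∈ Ann(f₀)_k` gives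
`∑ a ∈ S, |q(a)|² a₀ ^ (d - 2k) = 0`; hence `q` vanishes on `S` and `q = 0`.
-/

open MvPolynomial Module

/-- The differential operator `∂^α` on `ℂ[x_0,…,x_{N-1}]` given by a multi-index
`α : Fin N → ℕ`. -/
noncomputable def pd {N : ℕ} (α : Fin N → ℕ) :
    Module.End ℂ (MvPolynomial (Fin N) ℂ) :=
  (List.ofFn fun i =>
    ((MvPolynomial.pderiv (R := ℂ) i).toLinearMap :
      Module.End ℂ (MvPolynomial (Fin N) ℂ)) ^ (α i)).prod

/-- Apolarity action: the `ℂ`-linear map `q ↦ q(f)` sending a differential operator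
`q ∈ Q = ℂ[X_0,…,X_n]` (a polynomial in the `∂/∂x_i`) to its action on `f`.  It sends
the monomial `X^α` to `∂^α f`. -/
noncomputable def DopL {N : ℕ} (f : MvPolynomial (Fin N) ℂ) :
    MvPolynomial (Fin N) ℂ →ₗ[ℂ] MvPolynomial (Fin N) ℂ :=
  (MvPolynomial.basisMonomials (Fin N) ℂ).constr ℂ (fun α => pd (fun i => α i) f)

/-- The degree-`k` graded piece `A(f)_k = Q_k / Ann(f)_k` of the Artinian Gorenstein
algebra `A(f) = Q/Ann(f)` associated to `f` by Macaulay–Matlis duality. -/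
noncomputable abbrev Apiece {N : ℕ} (f : MvPolynomial (Fin N) ℂ) (k : ℕ) :=
  (homogeneousSubmodule (Fin N) ℂ k) ⧸
    (Submodule.comap (homogeneousSubmodule (Fin N) ℂ k).subtype (LinearMap.ker (DopL f)))

/-! ### Divided power coefficients -/

section DividedPower

variable {σ R : Type*} [CommSemiring R]

/-- The factorial `γ! = ∏ i, (γ i)!` of a multi-index. -/
def multiFactorial (γ : σ →₀ ℕ) : ℕ := γ.prod fun _ m => m.factorial

lemma multiFactorial_ne_zero (γ : σ →₀ ℕ) : multiFactorial γ ≠ 0 :=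
  Finset.prod_ne_zero_iff.2 fun i _ => (γ i).factorial_ne_zero

lemma multiFactorial_add_single_one (γ : σ →₀ ℕ) (i : σ) :
    multiFactorial (γ + Finsupp.single i 1) = (γ i + 1) * multiFactorial γ := by
  have split (δ : σ →₀ ℕ) : multiFactorial δ = (δ i).factorial * multiFactorial (δ.erase i) :=
    (Finsupp.mul_prod_erase' δ i _ fun _ => Nat.factorial_zero).symm
  rw [split, split γ, Finsupp.erase_add, Finsupp.erase_single, add_zero, Finsupp.add_apply,
    Finsupp.single_eq_same, Nat.factorial_succ, mul_assoc]

lemma multiFactorial_mul_multinomial (γ : σ →₀ ℕ) :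
    multiFactorial γ * γ.multinomial = γ.degree.factorial :=
  Nat.multinomial_spec γ.support γ

/-- The coefficient of a polynomial at `x^γ / γ!`, that is, `γ!` times its coefficient at `x^γ`. -/
noncomputable def dividedPowerCoeff (γ : σ →₀ ℕ) : MvPolynomial σ R →ₗ[R] R :=
  (multiFactorial γ : R) • lcoeff R γ

lemma dividedPowerCoeff_apply (γ : σ →₀ ℕ) (f : MvPolynomial σ R) :
    dividedPowerCoeff γ f = multiFactorial γ * f.coeff γ := rfl

lemma eq_zero_of_dividedPowerCoeff_eq_zero [NoZeroDivisors R] [CharZero R] {f : MvPolynomial σ R}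
    (h : ∀ γ, dividedPowerCoeff γ f = 0) : f = 0 := by
  ext γ
  exact (mul_eq_zero.1 (h γ)).resolve_left (Nat.cast_ne_zero.2 (multiFactorial_ne_zero γ))

lemma dividedPowerCoeff_pderiv (γ : σ →₀ ℕ) (i : σ) (f : MvPolynomial σ R) :
    dividedPowerCoeff γ (pderiv i f) = dividedPowerCoeff (γ + Finsupp.single i 1) f := by
  rw [dividedPowerCoeff_apply, dividedPowerCoeff_apply, coeff_pderiv, multiFactorial_add_single_one]
  push_cast
  ring

lemma dividedPowerCoeff_pderiv_pow (γ : σ →₀ ℕ) (i : σ) (m : ℕ) (f : MvPolynomial σ R) :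
    dividedPowerCoeff γ (((pderiv (R := R) i).toLinearMap ^ m : Module.End R _) f) =
      dividedPowerCoeff (γ + Finsupp.single i m) f := by
  induction m generalizing f with
  | zero => simp
  | succ m ih =>
    rw [pow_succ, Module.End.mul_apply, ih, Finsupp.single_add, ← add_assoc]
    exact dividedPowerCoeff_pderiv _ i f

end DividedPower

lemma dividedPowerCoeff_pd {N : ℕ} (γ α : Fin N →₀ ℕ) (f : MvPolynomial (Fin N) ℂ) :
    dividedPowerCoeff γ (pd α f) = dividedPowerCoeff (γ + α) f := by
  have shift (L : List (Fin N)) (γ : Fin N →₀ ℕ) :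
      dividedPowerCoeff γ ((L.map fun i =>
        ((pderiv (R := ℂ) i).toLinearMap ^ α i : Module.End ℂ _)).prod f) =
      dividedPowerCoeff (γ + (L.map fun i => Finsupp.single i (α i)).sum) f := by
    induction L generalizing γ with
    | nil => simp
    | cons i L ih =>
      rw [List.map_cons, List.prod_cons, Module.End.mul_apply, dividedPowerCoeff_pderiv_pow, ih,
        List.map_cons, List.sum_cons, add_assoc]
  rw [pd, List.ofFn_eq_map, shift, ← List.ofFn_eq_map, List.sum_ofFn, Finsupp.univ_sum_single]

/-! ### The apolar pairing -/

section ApolarPairing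

variable {σ R : Type*} [CommSemiring R]

/-- The apolar pairing `⟨f, q⟩`, the constant term of `q(∂) f`. It is defined by
`⟨f, X^γ⟩ = γ! · coeff γ f`, which makes sense over any commutative semiring. -/
noncomputable def apolarPairing : MvPolynomial σ R →ₗ[R] MvPolynomial σ R →ₗ[R] R :=
  ((basisMonomials σ R).constr R).toLinearMap ∘ₗ LinearMap.pi dividedPowerCoeff

lemma apolarPairing_monomial (f : MvPolynomial σ R) (γ : σ →₀ ℕ) (r : R) :
    apolarPairing f (monomial γ r) = r * dividedPowerCoeff γ f := by
  have : monomial γ r = r • basisMonomials σ R γ := by simp [smul_monomial]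
  rw [this, map_smul, smul_eq_mul]
  exact congrArg (r * ·) ((basisMonomials σ R).constr_basis R _ γ)

lemma apolarPairing_eq_sum (f q : MvPolynomial σ R) :
    apolarPairing f q = ∑ γ ∈ q.support, q.coeff γ * dividedPowerCoeff γ f := by
  conv_lhs => rw [q.as_sum, map_sum]
  exact Finset.sum_congr rfl fun γ _ => apolarPairing_monomial f γ _

lemma apolarPairing_eq_zero_of_ne {d e : ℕ} {f q : MvPolynomial σ R} (hf : f.IsHomogeneous d)
    (hq : q.IsHomogeneous e) (hde : d ≠ e) : apolarPairing f q = 0 := by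
  rw [apolarPairing_eq_sum]
  refine Finset.sum_eq_zero fun γ hγ => ?_
  have hγe : γ.degree = e := not_imp_comm.1 hq.coeff_eq_zero (mem_support_iff.1 hγ)
  rw [dividedPowerCoeff_apply, hf.coeff_eq_zero (by omega), mul_zero, mul_zero]

variable [Fintype σ]

/-- The linear form `∑ a_i x_i`. -/
noncomputable def linearForm (a : σ → R) : MvPolynomial σ R := ∑ i, a i • X i

lemma linearForm_isHomogeneous (a : σ → R) : (linearForm a).IsHomogeneous 1 :=
  IsHomogeneous.sum _ _ _ fun i _ => (homogeneousSubmodule σ R 1).smul_mem _ (isHomogeneous_X R i)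

lemma dividedPowerCoeff_linearForm_pow (a : σ → R) (γ : σ →₀ ℕ) :
    dividedPowerCoeff γ (linearForm a ^ γ.degree) = γ.degree.factorial * ∏ i, a i ^ γ i := by
  rw [dividedPowerCoeff_apply, linearForm, coeff_linearCombination_X_pow_of_fintype,
    if_pos (by rfl), Finsupp.prod_fintype _ _ fun _ => pow_zero _, ← mul_assoc, ← Nat.cast_mul,
    multiFactorial_mul_multinomial]

lemma apolarPairing_linearForm_pow {d : ℕ} (a : σ → R) {q : MvPolynomial σ R}
    (hq : q.IsHomogeneous d) :
    apolarPairing (linearForm a ^ d) q = d.factorial * eval a q := by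
  rw [apolarPairing_eq_sum, eval_eq', Finset.mul_sum]
  refine Finset.sum_congr rfl fun γ hγ => ?_
  have hγd : γ.degree = d := not_imp_comm.1 hq.coeff_eq_zero (mem_support_iff.1 hγ)
  rw [← hγd, dividedPowerCoeff_linearForm_pow, mul_left_comm]

end ApolarPairing

/-! ### Annihilators -/

section Annihilator

variable {N : ℕ}

/-- The degree-`k` piece `Ann(f)_k` of the annihilator of `f`. -/
noncomputable abbrev annihilatorPiece (f : MvPolynomial (Fin N) ℂ) (k : ℕ) :
    Submodule ℂ (MvPolynomial (Fin N) ℂ) :=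
  homogeneousSubmodule (Fin N) ℂ k ⊓ LinearMap.ker (DopL f)

lemma dividedPowerCoeff_DopL (f q : MvPolynomial (Fin N) ℂ) (γ : Fin N →₀ ℕ) :
    dividedPowerCoeff γ (DopL f q) = apolarPairing f (q * monomial γ 1) := by
  induction q using MvPolynomial.induction_on' with
  | monomial α r =>
    have : monomial α r = r • basisMonomials (Fin N) ℂ α := by simp [smul_monomial]
    rw [monomial_mul, apolarPairing_monomial, this, map_smul, map_smul, DopL, Basis.constr_basis,
      dividedPowerCoeff_pd, smul_eq_mul, mul_one, add_comm]
  | add p q hp hq => rw [add_mul, map_add, map_add, map_add, hp, hq]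

lemma DopL_eq_zero_iff_monomial {f q : MvPolynomial (Fin N) ℂ} :
    DopL f q = 0 ↔ ∀ γ, apolarPairing f (q * monomial γ 1) = 0 := by
  simp only [← dividedPowerCoeff_DopL]
  exact ⟨fun h γ => by rw [h, map_zero], eq_zero_of_dividedPowerCoeff_eq_zero⟩

lemma DopL_eq_zero_iff {f q : MvPolynomial (Fin N) ℂ} :
    DopL f q = 0 ↔ ∀ r, apolarPairing f (q * r) = 0 := by
  refine ⟨fun h r => ?_, fun h => DopL_eq_zero_iff_monomial.2 fun γ => h _⟩
  induction r using MvPolynomial.induction_on' with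
  | monomial γ c =>
    rw [← mul_one c, ← smul_eq_mul c, ← smul_monomial, mul_smul_comm, map_smul,
      DopL_eq_zero_iff_monomial.1 h, smul_zero]
  | add r s hr hs => rw [mul_add, map_add, hr, hs, add_zero]

lemma DopL_mul_eq_zero {f q : MvPolynomial (Fin N) ℂ} (hq : DopL f q = 0)
    (r : MvPolynomial (Fin N) ℂ) : DopL f (q * r) = 0 :=
  DopL_eq_zero_iff.2 fun s => by rw [mul_assoc, DopL_eq_zero_iff.1 hq]

lemma annihilatorPiece_eq_bot_of_le [NeZero N] {f : MvPolynomial (Fin N) ℂ} {k m : ℕ} (hkm : k ≤ m)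
    (h : annihilatorPiece f m = ⊥) : annihilatorPiece f k = ⊥ := by
  refine (Submodule.eq_bot_iff _).2 fun q ⟨hq, hq_ker⟩ => ?_
  have hmem : q * X 0 ^ (m - k) ∈ annihilatorPiece f m := by
    refine ⟨?_, DopL_mul_eq_zero hq_ker _⟩
    have := IsHomogeneous.mul hq (isHomogeneous_X_pow (R := ℂ) (0 : Fin N) (m - k))
    rwa [Nat.add_sub_cancel' hkm] at this
  rw [h, Submodule.mem_bot] at hmem
  exact (mul_eq_zero.1 hmem).resolve_right (pow_ne_zero _ (X_ne_zero 0))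

end Annihilator

/-! ### Catalecticant matrices -/

section Catalecticant

/-- The exponents of the monomials of degree `k` in the variables `σ`. -/
abbrev Exponent (σ : Type*) (k : ℕ) := {γ : σ →₀ ℕ // γ.degree = k}

noncomputable instance (σ : Type*) [Finite σ] (k : ℕ) : Fintype (Exponent σ k) :=
  (Finsupp.finite_of_degree_eq k).fintype

lemma card_exponent_fin (n k : ℕ) : Fintype.card (Exponent (Fin (n + 1)) k) = (n + k).choose n := by
  rw [Fintype.card_of_subtype (Finset.univ.finsuppAntidiag k) fun γ => by
      simp [Finsupp.degree_eq_sum],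
    Finset.card_finsuppAntidiag_nat_eq_choose, Finset.card_univ, Fintype.card_fin,
    Nat.add_right_comm, Nat.add_sub_cancel, Nat.choose_symm_add]

section

variable (σ R : Type*) [CommSemiring R]

/-- The monomial basis of the space of forms of degree `k`. -/
noncomputable def homogeneousBasis (k : ℕ) :
    Basis (Exponent σ k) R (homogeneousSubmodule σ R k) :=
  (basisRestrictSupport R {γ : σ →₀ ℕ | γ.degree = k}).map
    (LinearEquiv.ofEq _ _ (homogeneousSubmodule_eq_finsupp_supported σ R k).symm)

end

variable {σ R : Type*} [CommSemiring R]

lemma homogeneousBasis_repr_apply {k : ℕ} (q : homogeneousSubmodule σ R k) (α : Exponent σ k) :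
    (homogeneousBasis σ R k).repr q α = q.1.coeff α := rfl

lemma coe_homogeneousBasis {k : ℕ} (α : Exponent σ k) :
    (homogeneousBasis σ R k α : MvPolynomial σ R) = monomial α.1 1 := by
  classical
  suffices homogeneousBasis σ R k α = ⟨monomial α.1 1, isHomogeneous_monomial 1 α.2⟩ from
    congrArg Subtype.val this
  rw [Basis.apply_eq_iff]
  ext β
  rw [homogeneousBasis_repr_apply, coeff_monomial, Finsupp.single_apply]
  simp only [Subtype.ext_iff]

/-- The catalecticant matrix of `f`: the matrix of the bilinear map `(r, q) ↦ ⟨f, q r⟩` on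
`Q_j × Q_k` in the monomial bases. -/
noncomputable def catalecticant (f : MvPolynomial σ R) (j k : ℕ) :
    Matrix (Exponent σ j) (Exponent σ k) R :=
  Matrix.of fun γ α => dividedPowerCoeff (γ.1 + α.1) f

lemma catalecticant_transpose (f : MvPolynomial σ R) (j k : ℕ) :
    (catalecticant f j k).transpose = catalecticant f k j := by
  ext α γ
  simp only [catalecticant, Matrix.transpose_apply, Matrix.of_apply, add_comm]

/-- The catalecticant matrix of the form with indeterminate coefficients. -/
noncomputable def genericCatalecticant (σ R : Type*) [CommSemiring R] (j k : ℕ) :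
    Matrix (Exponent σ j) (Exponent σ k) (MvPolynomial (σ →₀ ℕ) R) :=
  Matrix.of fun γ α => (multiFactorial (γ.1 + α.1) : MvPolynomial _ R) * X (γ.1 + α.1)

lemma genericCatalecticant_map_eval (f : MvPolynomial σ R) (j k : ℕ) :
    (genericCatalecticant σ R j k).map (eval fun γ => f.coeff γ) = catalecticant f j k := by
  ext γ α
  simp only [genericCatalecticant, catalecticant, Matrix.map_apply, Matrix.of_apply, map_mul,
    map_natCast, eval_X, dividedPowerCoeff_apply]

lemma catalecticant_mulVec_repr [Finite σ] (f : MvPolynomial σ R) {j k : ℕ}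
    (q : homogeneousSubmodule σ R k) (γ : Exponent σ j) :
    (catalecticant f j k).mulVec ((homogeneousBasis σ R k).repr q) γ =
      apolarPairing f (q.1 * monomial γ.1 1) := by
  have hq : q.1 = ∑ α : Exponent σ k, q.1.coeff α • monomial α.1 1 := by
    simpa only [homogeneousBasis_repr_apply, Submodule.coe_sum, Submodule.coe_smul,
      coe_homogeneousBasis] using congrArg Subtype.val ((homogeneousBasis σ R k).sum_repr q).symm
  conv_rhs => rw [hq]
  rw [Finset.sum_mul, map_sum]
  refine Finset.sum_congr rfl fun α _ => ?_
  rw [smul_mul_assoc, map_smul, monomial_mul, mul_one, apolarPairing_monomial, one_mul, add_comm,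
    smul_eq_mul, mul_comm]
  rfl

end Catalecticant

section Rank

variable {N j k : ℕ} {f : MvPolynomial (Fin N) ℂ}

lemma DopL_eq_zero_iff_catalecticant (hf : f.IsHomogeneous (j + k))
    (q : homogeneousSubmodule (Fin N) ℂ k) :
    DopL f q = 0 ↔ (catalecticant f j k).mulVec ((homogeneousBasis (Fin N) ℂ k).repr q) = 0 := by
  rw [DopL_eq_zero_iff_monomial, funext_iff]
  simp only [catalecticant_mulVec_repr]
  refine ⟨fun h γ => h γ, fun h γ => ?_⟩
  by_cases hγ : γ.degree = j
  · exact h ⟨γ, hγ⟩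
  · exact apolarPairing_eq_zero_of_ne hf (q.2.mul (isHomogeneous_monomial 1 rfl)) (by omega)

lemma comap_ker_DopL (hf : f.IsHomogeneous (j + k)) :
    (LinearMap.ker (DopL f)).comap (homogeneousSubmodule (Fin N) ℂ k).subtype =
      LinearMap.ker ((catalecticant f j k).mulVecLin ∘ₗ
        (homogeneousBasis (Fin N) ℂ k).equivFun.toLinearMap) := by
  ext q
  exact DopL_eq_zero_iff_catalecticant hf q

lemma annihilatorPiece_eq_bot_iff (hf : f.IsHomogeneous (j + k)) :
    annihilatorPiece f k = ⊥ ↔ Function.Injective (catalecticant f j k).mulVec := by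
  rw [← disjoint_iff, Submodule.disjoint_iff_comap_eq_bot, comap_ker_DopL hf, LinearMap.ker_eq_bot]
  exact EquivLike.injective_comp (homogeneousBasis (Fin N) ℂ k).equivFun
    (catalecticant f j k).mulVec

lemma finrank_Apiece_eq_rank (hf : f.IsHomogeneous (j + k)) :
    finrank ℂ (Apiece f k) = (catalecticant f j k).rank := by
  rw [(Submodule.quotEquivOfEq _ _ (comap_ker_DopL hf)).finrank_eq,
    (LinearMap.quotKerEquivRange _).finrank_eq, LinearEquiv.range_comp, Matrix.rank]

lemma finrank_Apiece_symm (hf : f.IsHomogeneous (j + k)) :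
    finrank ℂ (Apiece f k) = finrank ℂ (Apiece f j) := by
  rw [finrank_Apiece_eq_rank hf, finrank_Apiece_eq_rank (add_comm j k ▸ hf),
    ← catalecticant_transpose, Matrix.rank_transpose]

lemma finrank_Apiece_of_annihilatorPiece_eq_bot {n k : ℕ} {f : MvPolynomial (Fin (n + 1)) ℂ}
    (h : annihilatorPiece f k = ⊥) : finrank ℂ (Apiece f k) = (n + k).choose n := by
  rw [← disjoint_iff, Submodule.disjoint_iff_comap_eq_bot] at h
  rw [(Submodule.quotEquivOfEqBot _ h).finrank_eq,
    finrank_eq_card_basis (homogeneousBasis _ ℂ k), card_exponent_fin]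

end Rank

/-! ### Injectivity is an open condition -/

lemma exists_eval_ne_zero_imp_mulVec_injective {K τ m n : Type*} [Field K] [Finite m] [Fintype n]
    (A : Matrix m n (MvPolynomial τ K)) {c₀ : τ → K}
    (h₀ : Function.Injective (A.map (eval c₀)).mulVec) :
    ∃ P : MvPolynomial τ K, eval c₀ P ≠ 0 ∧
      ∀ c, eval c P ≠ 0 → Function.Injective (A.map (eval c)).mulVec := by
  classical
  cases nonempty_fintype m
  obtain ⟨g, hg⟩ := (A.map (eval c₀)).mulVecLin.exists_leftInverse_of_injective
    (LinearMap.ker_eq_bot.2 h₀)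
  set B := LinearMap.toMatrix' g
  have hB : B * A.map (eval c₀) = 1 := by
    rw [← LinearMap.toMatrix'_id, ← hg, LinearMap.toMatrix'_comp, ← Matrix.toLin'_apply',
      LinearMap.toMatrix'_toLin']
  have heval (c : τ → K) : eval c (B.map (C (σ := τ)) * A).det = (B * A.map (eval c)).det := by
    rw [RingHom.map_det, RingHom.mapMatrix_apply, Matrix.map_mul, Matrix.map_map]
    congr
    ext i j
    exact eval_C _
  refine ⟨(B.map (C (σ := τ)) * A).det, ?_, fun c hc => ?_⟩
  · rw [heval, hB, Matrix.det_one]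
    exact one_ne_zero
  · rw [heval] at hc
    refine Function.Injective.of_comp (f := B.mulVec) ?_
    simpa only [Function.comp_def, Matrix.mulVec_mulVec] using
      Matrix.mulVec_injective_of_det_ne_zero hc

lemma exists_eval_coeff_ne_zero_imp_annihilatorPiece_eq_bot {N j k : ℕ}
    {f₀ : MvPolynomial (Fin N) ℂ} (hf₀ : f₀.IsHomogeneous (j + k))
    (h₀ : annihilatorPiece f₀ k = ⊥) :
    ∃ P : MvPolynomial (Fin N →₀ ℕ) ℂ, eval (fun γ => f₀.coeff γ) P ≠ 0 ∧
      ∀ f : MvPolynomial (Fin N) ℂ, f.IsHomogeneous (j + k) → eval (fun γ => f.coeff γ) P ≠ 0 →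
        annihilatorPiece f k = ⊥ := by
  rw [annihilatorPiece_eq_bot_iff hf₀, ← genericCatalecticant_map_eval] at h₀
  obtain ⟨P, hP₀, hP⟩ := exists_eval_ne_zero_imp_mulVec_injective _ h₀
  refine ⟨P, hP₀, fun f hf hfP => ?_⟩
  rw [annihilatorPiece_eq_bot_iff hf, ← genericCatalecticant_map_eval]
  exact hP _ hfP

/-! ### Sums of powers of real linear forms -/

lemma exists_finset_pos_eq_zero_of_eval_eq_zero (σ : Type*) [Finite σ] (m : ℕ) :
    ∃ S : Finset (σ → ℝ), (∀ a ∈ S, ∀ i, 0 < a i) ∧ ∀ q : MvPolynomial σ ℂ, q.totalDegree ≤ m →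
      (∀ a ∈ S, eval (fun i => (a i : ℂ)) q = 0) → q = 0 := by
  classical
  cases nonempty_fintype σ
  refine ⟨Fintype.piFinset fun _ => (Finset.Icc 1 (m + 1)).map Nat.castEmbedding,
    fun a ha i => ?_, fun q hq h => ?_⟩
  · obtain ⟨p, hp, hpa⟩ := Finset.mem_map.1 (Fintype.mem_piFinset.1 ha i)
    rw [← hpa]
    exact Nat.cast_pos.2 (Finset.mem_Icc.1 hp).1
  · refine eq_zero_of_eval_zero_at_prod_finset q
      (fun _ => (Finset.Icc 1 (m + 1)).map Nat.castEmbedding) (fun i => ?_) fun x hx => ?_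
    · rw [Finset.card_map, Nat.card_Icc, Nat.add_sub_cancel]
      exact Nat.lt_succ_of_le ((degreeOf_le_totalDegree q i).trans hq)
    · simp only [Finset.mem_map] at hx
      choose p hp hpx using hx
      obtain rfl : (fun i => (((p i : ℕ) : ℝ) : ℂ)) = x := by
        ext i
        rw [← hpx]
        exact Complex.ofReal_natCast _
      exact h _ (Fintype.mem_piFinset.2 fun i => Finset.mem_map.2 ⟨p i, hp i, rfl⟩)

lemma eval_ofReal_map_conj {σ : Type*} (a : σ → ℝ) (q : MvPolynomial σ ℂ) :
    eval (fun i => (a i : ℂ)) (map (starRingEnd ℂ) q) =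
      starRingEnd ℂ (eval (fun i => (a i : ℂ)) q) := by
  rw [map_eval]
  simp only [Function.comp_def, Complex.conj_ofReal]

lemma annihilatorPiece_sum_linearForm_pow_eq_bot {N j k : ℕ} [NeZero N] (hkj : k ≤ j)
    {S : Finset (Fin N → ℝ)} (hS : ∀ a ∈ S, 0 < a 0)
    (hvanish : ∀ q : MvPolynomial (Fin N) ℂ, q.IsHomogeneous k →
      (∀ a ∈ S, eval (fun i => (a i : ℂ)) q = 0) → q = 0) :
    annihilatorPiece (∑ a ∈ S, linearForm (fun i => (a i : ℂ)) ^ (j + k)) k = ⊥ := by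
  refine (Submodule.eq_bot_iff _).2 fun q ⟨hq, hq_ker⟩ => hvanish q hq ?_
  set r := map (starRingEnd ℂ) q * X 0 ^ (j - k)
  have hqr : (q * r).IsHomogeneous (j + k) := by
    have := IsHomogeneous.mul hq ((IsHomogeneous.map hq (starRingEnd ℂ)).mul
      (isHomogeneous_X_pow (0 : Fin N) (j - k)))
    rwa [Nat.add_sub_cancel' hkj, add_comm k j] at this
  have heval (a : Fin N → ℝ) : eval (fun i => (a i : ℂ)) (q * r) =
      ((Complex.normSq (eval (fun i => (a i : ℂ)) q) * a 0 ^ (j - k) : ℝ) : ℂ) := by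
    rw [map_mul, map_mul, eval_ofReal_map_conj, map_pow, eval_X, ← mul_assoc, Complex.mul_conj,
      Complex.ofReal_mul, Complex.ofReal_pow]
  have hsum : ∑ a ∈ S, Complex.normSq (eval (fun i => (a i : ℂ)) q) * a 0 ^ (j - k) = 0 := by
    have hpair := DopL_eq_zero_iff.1 hq_ker r
    simp only [map_sum, LinearMap.sum_apply, apolarPairing_linearForm_pow _ hqr, heval,
      ← Finset.mul_sum, ← Complex.ofReal_sum] at hpair
    exact Complex.ofReal_eq_zero.1
      ((mul_eq_zero.1 hpair).resolve_left (Nat.cast_ne_zero.2 (j + k).factorial_ne_zero))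
  intro a ha
  have hterm := (Finset.sum_eq_zero_iff_of_nonneg fun b hb =>
    mul_nonneg (Complex.normSq_nonneg _) (pow_nonneg (hS b hb).le _)).1 hsum a ha
  exact Complex.normSq_eq_zero.1 ((mul_eq_zero.1 hterm).resolve_right (pow_ne_zero _ (hS a ha).ne'))

lemma exists_isHomogeneous_annihilatorPiece_eq_bot (N : ℕ) [NeZero N] {j k : ℕ} (hkj : k ≤ j) :
    ∃ f : MvPolynomial (Fin N) ℂ, f.IsHomogeneous (j + k) ∧ annihilatorPiece f k = ⊥ := by
  obtain ⟨S, hS, hvanish⟩ := exists_finset_pos_eq_zero_of_eval_eq_zero (Fin N) k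
  refine ⟨_, IsHomogeneous.sum _ _ _ fun a _ => ?_, annihilatorPiece_sum_linearForm_pow_eq_bot hkj
    (fun a ha => hS a ha 0) fun q hq => hvanish q hq.totalDegree_le⟩
  simpa only [one_mul] using (linearForm_isHomogeneous fun i => (a i : ℂ)).pow (j + k)

/-- **Proposition (after Z. Wang).** For every `n ≥ 1` and `d ≥ 1` there is a nonempty
Zariski-open subset `U'_d` of `R_d` (given by the nonvanishing of a polynomial `P` in the
coefficients, which is nonzero at some homogeneous `f₀` of degree `d`) such that for every
`f ∈ U'_d` one has `Ann(f)_k = 0` and `dim A(f)_k = C(n+k,n)` for `0 ≤ k ≤ d/2`, and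
`dim A(f)_k = C(n+d-k,n)` for `d/2 < k ≤ d`. -/
theorem generic_gorenstein_hilbert_function
    {n d : ℕ} (hn : 1 ≤ n) (hd : 1 ≤ d) :
    ∃ P : MvPolynomial (Fin (n + 1) →₀ ℕ) ℂ,
      (∃ f₀ : MvPolynomial (Fin (n + 1)) ℂ, f₀.IsHomogeneous d ∧
        eval (fun α => f₀.coeff α) P ≠ 0) ∧
      ∀ f : MvPolynomial (Fin (n + 1)) ℂ, f.IsHomogeneous d →
        eval (fun α => f.coeff α) P ≠ 0 →
          (∀ k : ℕ, 2 * k ≤ d →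
            homogeneousSubmodule (Fin (n + 1)) ℂ k ⊓ LinearMap.ker (DopL f) = ⊥) ∧
          (∀ k : ℕ, 2 * k ≤ d →
            Module.finrank ℂ (Apiece f k) = Nat.choose (n + k) n) ∧
          (∀ k : ℕ, d < 2 * k → k ≤ d →
            Module.finrank ℂ (Apiece f k) = Nat.choose (n + (d - k)) n) := by
  obtain ⟨j, m, rfl, hmj, hjm⟩ : ∃ j m, d = j + m ∧ m ≤ j ∧ j ≤ m + 1 :=
    ⟨d - d / 2, d / 2, by omega⟩
  obtain ⟨f₀, hf₀, h₀⟩ := exists_isHomogeneous_annihilatorPiece_eq_bot (n + 1) hmj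
  obtain ⟨P, hP₀, hP⟩ := exists_eval_coeff_ne_zero_imp_annihilatorPiece_eq_bot hf₀ h₀
  refine ⟨P, ⟨f₀, hf₀, hP₀⟩, fun f hf hfP => ?_⟩
  have hann (k : ℕ) (hk : 2 * k ≤ j + m) : annihilatorPiece f k = ⊥ :=
    annihilatorPiece_eq_bot_of_le (by omega) (hP f hf hfP)
  have hdim (k : ℕ) (hk : 2 * k ≤ j + m) : finrank ℂ (Apiece f k) = (n + k).choose n :=
    finrank_Apiece_of_annihilatorPiece_eq_bot (hann k hk)
  refine ⟨hann, hdim, fun k hk hkd => ?_⟩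
  rw [finrank_Apiece_symm (j := j + m - k) (by rwa [Nat.sub_add_cancel hkd]), hdim _ (by omega)]
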